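/- Let y ∈ V^n be a probability vector with positive components, let 1 < d < n−1, and let c be a vector with positive non-increasing components. If l_u(c) > max{y_d/y_1, y_n/y_{d+1}} and g_u(c) < y_{d+1}/y_d, then for every x ∈ K_d(y) one has x⊗c ◁ y⊗c. -/

import Mathlib

noncomputable section

/-- `eSum x l` : the sum of the `l` largest components of `x`. -/
def eSum {n : ℕ} (x : Fin n → ℝ) (l : ℕ) : ℝ :=
  sSup {r | ∃ s : Finset (Fin n), s.card = l ∧ r = ∑ i ∈ s, x i}

/-- `ESum x l` : the sum of the `l` smallest components of `x`. -/
def ESum {n : ℕ} (x : Fin n → ℝ) (l : ℕ) : ℝ :=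
  sInf {r | ∃ s : Finset (Fin n), s.card = l ∧ r = ∑ i ∈ s, x i}

/-- Majorization `x ≺ y` (for vectors with equal total sum):
`e_l(x) ≤ e_l(y)` for all `1 ≤ l ≤ n`. -/
def Maj {n : ℕ} (x y : Fin n → ℝ) : Prop :=
  (∑ i, x i) = (∑ i, y i) ∧ ∀ l : ℕ, 1 ≤ l → l ≤ n → eSum x l ≤ eSum y l

/-- Strict majorization `x ◁ y`: equal total sums and `e_l(x) < e_l(y)` for all
`1 ≤ l ≤ n - 1`. -/
def SMaj {n : ℕ} (x y : Fin n → ℝ) : Prop :=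
  (∑ i, x i) = (∑ i, y i) ∧ ∀ l : ℕ, 1 ≤ l → l + 1 ≤ n → eSum x l < eSum y l

/-- Super-majorization `x ≺ʷ y` : `E_l(x) ≥ E_l(y)` for all `1 ≤ l ≤ n`. -/
def SupMaj {n : ℕ} (x y : Fin n → ℝ) : Prop :=
  ∀ l : ℕ, 1 ≤ l → l ≤ n → ESum y l ≤ ESum x l

/-- Strict super-majorization `x ◁ʷ y` : `E_l(x) > E_l(y)` for all `1 ≤ l ≤ n`. -/
def SSupMaj {n : ℕ} (x y : Fin n → ℝ) : Prop :=
  ∀ l : ℕ, 1 ≤ l → l ≤ n → ESum y l < ESum x l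

/-- Tensor product of two vectors: the vector of all pairwise products. -/
def tensor {m k : ℕ} (x : Fin m → ℝ) (c : Fin k → ℝ) : Fin (m * k) → ℝ :=
  fun i => x (finProdFinEquiv.symm i).1 * c (finProdFinEquiv.symm i).2

/-- `k`-fold tensor power of a vector. -/
def tpow {n : ℕ} (x : Fin n → ℝ) (k : ℕ) : Fin (n ^ k) → ℝ :=
  fun i => ∏ j : Fin k, x (finFunctionFinEquiv.symm i j)

/-- `V^n` : probability vectors with components in non-increasing order. -/
def Vn (n : ℕ) : Set (Fin n → ℝ) :=
  {x | (∀ i, 0 ≤ x i) ∧ (∑ i, x i) = 1 ∧ Antitone x}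

/-- `S(y)` : members of `V^n` majorized by `y`. -/
def Sset {n : ℕ} (y : Fin n → ℝ) : Set (Fin n → ℝ) :=
  {x ∈ Vn n | Maj x y}

/-- `T(y,c)` : members of `V^n` with `x ⊗ c ≺ y ⊗ c`. -/
def Tcat {n k : ℕ} (y : Fin n → ℝ) (c : Fin k → ℝ) : Set (Fin n → ℝ) :=
  {x ∈ Vn n | Maj (tensor x c) (tensor y c)}

/-- Local uniformity `l_u(c)` : the minimum of the consecutive ratios `c_{i+1}/c_i`. -/
def lu {k : ℕ} (c : Fin k → ℝ) : ℝ :=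
  sInf {r | ∃ i : ℕ, ∃ h : i + 1 < k, r = c ⟨i + 1, h⟩ / c ⟨i, Nat.lt_of_succ_lt h⟩}

/-- Global uniformity `g_u(c) = c_k / c_1` (smallest over largest component of a
non-increasingly ordered vector). -/
def gu {k : ℕ} (c : Fin k → ℝ) : ℝ :=
  if h : 0 < k then c ⟨k - 1, Nat.sub_lt h Nat.one_pos⟩ / c ⟨0, h⟩ else 1

/-- Largest component. -/
def maxc {n : ℕ} (x : Fin n → ℝ) : ℝ := sSup (Set.range x)

/-- Smallest component. -/
def minc {n : ℕ} (x : Fin n → ℝ) : ℝ := sInf (Set.range x)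

/-- `c'` is a (contiguous) segment of `c`. -/
def IsSegment {j k : ℕ} (c' : Fin j → ℝ) (c : Fin k → ℝ) : Prop :=
  ∃ (i : ℕ) (_h : i + j ≤ k), ∀ t : Fin j, c' t = c ⟨i + t, by have := t.isLt; omega⟩

/-- The first `d` components of a vector. -/
def take {n : ℕ} (x : Fin n → ℝ) (d : ℕ) (h : d ≤ n) : Fin d → ℝ :=
  fun i => x ⟨i, Nat.lt_of_lt_of_le i.isLt h⟩

/-- The components of a vector after the first `d` ones. -/
def drop {n : ℕ} (x : Fin n → ℝ) (d : ℕ) : Fin (n - d) → ℝ :=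
  fun i => x ⟨d + i, by have := i.isLt; omega⟩

/-- The segment `(c_i, …, c_j)` of `c` (`0`-based indices). -/
def seg {k : ℕ} (c : Fin k → ℝ) (i j : ℕ) (hij : i ≤ j) (hj : j < k) :
    Fin (j - i + 1) → ℝ :=
  fun t => c ⟨i + t, by have := t.isLt; omega⟩

/-- `(c_i, …, c_j)` is a block of the decomposition `[c]_α` of the (positive,
non-increasingly ordered) vector `c` according to `α`: ratios within the block
exceed `α`, and the ratios at the two boundaries of the block are `≤ α`
(or the block touches an end of `c`). -/
def IsBlock {k : ℕ} (α : ℝ) (c : Fin k → ℝ) (i j : ℕ) : Prop :=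
  ∃ (hij : i ≤ j) (hj : j < k),
    (i = 0 ∨ c ⟨i, by omega⟩ / c ⟨i - 1, by omega⟩ ≤ α) ∧
    (j = k - 1 ∨ ∃ hj1 : j + 1 < k, c ⟨j + 1, hj1⟩ / c ⟨j, hj⟩ ≤ α) ∧
    (∀ (t : ℕ) (ht1 : i ≤ t) (ht2 : t < j), α < c ⟨t + 1, by omega⟩ / c ⟨t, by omega⟩)

/-- `T_k(y)` : states transformable to `y` with a `k`-dimensional catalyst. -/
def Tk {n : ℕ} (k : ℕ) (y : Fin n → ℝ) : Set (Fin n → ℝ) :=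
  {x ∈ Vn n | ∃ c : Fin k → ℝ, (∀ i, 0 < c i) ∧ (∑ i, c i) = 1 ∧ Antitone c ∧
    Maj (tensor x c) (tensor y c)}

/-- `M_k(y)` : states `x` with `x^{⊗k} ≺ y^{⊗k}`. -/
def Mk {n : ℕ} (k : ℕ) (y : Fin n → ℝ) : Set (Fin n → ℝ) :=
  {x ∈ Vn n | Maj (tpow x k) (tpow y k)}

/-- `T(y)` : states transformable to `y` with some catalyst. -/
def Tinf {n : ℕ} (y : Fin n → ℝ) : Set (Fin n → ℝ) :=
  {x ∈ Vn n | ∃ (k : ℕ) (c : Fin k → ℝ), 0 < k ∧ (∀ i, 0 < c i) ∧ (∑ i, c i) = 1 ∧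
    Antitone c ∧ Maj (tensor x c) (tensor y c)}

/-- `M(y)` : states `x` with `x^{⊗k} ≺ y^{⊗k}` for some `k ≥ 1`. -/
def Minf {n : ℕ} (y : Fin n → ℝ) : Set (Fin n → ℝ) :=
  {x ∈ Vn n | ∃ k : ℕ, 1 ≤ k ∧ Maj (tpow x k) (tpow y k)}

/-- `S^λ(y)` : states `x` with `x ≺ʷ λ y`. -/
def Slam {n : ℕ} (lam : ℝ) (y : Fin n → ℝ) : Set (Fin n → ℝ) :=
  {x ∈ Vn n | SupMaj x (fun i => lam * y i)}

/-- `T^λ(y,c)` : states `x` with `x ⊗ c ≺ʷ λ (y ⊗ c)`. -/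
def Tlamc {n k : ℕ} (lam : ℝ) (y : Fin n → ℝ) (c : Fin k → ℝ) : Set (Fin n → ℝ) :=
  {x ∈ Vn n | SupMaj (tensor x c) (fun i => lam * tensor y c i)}

/-- `T_k^λ(y)`. -/
def Tklam {n : ℕ} (k : ℕ) (lam : ℝ) (y : Fin n → ℝ) : Set (Fin n → ℝ) :=
  {x ∈ Vn n | ∃ c : Fin k → ℝ, (∀ i, 0 < c i) ∧ (∑ i, c i) = 1 ∧ Antitone c ∧
    SupMaj (tensor x c) (fun i => lam * tensor y c i)}

/-- `M_k^λ(y)`. -/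
def Mklam {n : ℕ} (k : ℕ) (lam : ℝ) (y : Fin n → ℝ) : Set (Fin n → ℝ) :=
  {x ∈ Vn n | SupMaj (tpow x k) (fun i => lam ^ k * tpow y k i)}

/-- `T^λ(y)`. -/
def Tlaminf {n : ℕ} (lam : ℝ) (y : Fin n → ℝ) : Set (Fin n → ℝ) :=
  {x ∈ Vn n | ∃ (k : ℕ) (c : Fin k → ℝ), 0 < k ∧ (∀ i, 0 < c i) ∧ (∑ i, c i) = 1 ∧
    Antitone c ∧ SupMaj (tensor x c) (fun i => lam * tensor y c i)}

/-- `M^λ(y)`. -/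
def Mlaminf {n : ℕ} (lam : ℝ) (y : Fin n → ℝ) : Set (Fin n → ℝ) :=
  {x ∈ Vn n | ∃ k : ℕ, 1 ≤ k ∧ SupMaj (tpow x k) (fun i => lam ^ k * tpow y k i)}

/-- `K_d(y)` : concatenations `x = x' ⊕ x''` with `x' ◁ y'` and `x'' ◁ y''`,
where `y'` is the first-`d` part of `y` and `y''` the rest. -/
def Kd {n : ℕ} (y : Fin n → ℝ) (d : ℕ) (h : d ≤ n) : Set (Fin n → ℝ) :=
  {x ∈ Vn n | SMaj (take x d h) (take y d h) ∧ SMaj (drop x d) (drop y d)}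

/-- `y(d)` : first `d` components equal to `e_d(y)/d`, the last `n-d` equal to
`(1 - e_d(y))/(n-d)`. -/
def yvec {n : ℕ} (y : Fin n → ℝ) (d : ℕ) : Fin n → ℝ :=
  fun i => if (i : ℕ) < d then eSum y d / d else (1 - eSum y d) / (n - d)

/-- `K_d^λ(y)` : states `x ∈ S^λ(y)` with `E_l(x) = λ E_l(y)` iff `l = n - d`. -/
def Kdlam {n : ℕ} (lam : ℝ) (y : Fin n → ℝ) (d : ℕ) : Set (Fin n → ℝ) :=
  {x ∈ Vn n | SupMaj x (fun i => lam * y i) ∧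
    ∀ l : ℕ, 1 ≤ l → l ≤ n → (ESum x l = lam * ESum y l ↔ l = n - d)}

/-- The sum of the first `r` components of `x`, where `x` is extended by zero. -/
def prefixSum {n : ℕ} (x : Fin n → ℝ) (r : ℕ) : ℝ :=
  ∑ i ∈ Finset.range r, if h : i < n then x ⟨i, h⟩ else 0

lemma prefixSum_eq_sum_filter {n : ℕ} (x : Fin n → ℝ) {r : ℕ} (hr : r ≤ n) :
    prefixSum x r = ∑ i with i.val < r, x i := by
  unfold prefixSum
  symm
  refine Finset.sum_bij (fun i _ => i.val) ?_ ?_ ?_ ?_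
  · intro i hi
    simpa using hi
  · intro i _ j _ h
    exact Fin.ext h
  · intro b hb
    have hb' := Finset.mem_range.1 hb
    exact ⟨⟨b, by omega⟩, by simpa using hb', rfl⟩
  · intro i _
    simp

lemma prefixSum_self {n : ℕ} (x : Fin n → ℝ) : prefixSum x n = ∑ i, x i := by
  rw [prefixSum_eq_sum_filter x le_rfl]
  simp

lemma card_filter_val_lt {n r : ℕ} (hr : r ≤ n) :
    (Finset.univ.filter fun i : Fin n => i.val < r).card = r := by
  rw [Fin.card_filter_val_lt, min_eq_right hr]

lemma prefixSum_take {n d r : ℕ} (x : Fin n → ℝ) (h : d ≤ n) (hr : r ≤ d) :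
    prefixSum (take x d h) r = prefixSum x r := by
  refine Finset.sum_congr rfl fun i hi => ?_
  have hi' := Finset.mem_range.1 hi
  rw [dif_pos (by omega), dif_pos (by omega)]
  rfl

lemma prefixSum_add {n d r : ℕ} (x : Fin n → ℝ) :
    prefixSum x (d + r) = prefixSum x d + prefixSum (drop x d) r := by
  unfold prefixSum
  rw [Finset.sum_range_add]
  congr 1
  refine Finset.sum_congr rfl fun i _ => ?_
  by_cases h : i < n - d
  · rw [dif_pos h, dif_pos (by omega)]
    rfl
  · rw [dif_neg h, dif_neg (by omega)]

lemma sum_le_prefixSum_card {n : ℕ} {x : Fin n → ℝ} (hx : Antitone x) (s : Finset (Fin n)) :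
    ∑ i ∈ s, x i ≤ prefixSum x s.card := by
  have hs : s.card ≤ n := by simpa using s.card_le_univ
  have key : ∀ m (hm : m < s.card), m ≤ (s.orderEmbOfFin rfl ⟨m, hm⟩).val := by
    intro m
    induction m with
    | zero => intro _; exact Nat.zero_le _
    | succ m ih =>
      intro hm
      have h1 := ih (by omega)
      have h2 : s.orderEmbOfFin rfl ⟨m, by omega⟩ < s.orderEmbOfFin rfl ⟨m + 1, hm⟩ :=
        (s.orderEmbOfFin rfl).strictMono (Fin.mk_lt_mk.2 (Nat.lt_succ_self m))
      have h3 := Fin.lt_def.1 h2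
      omega
  have h1 : ∑ i ∈ s, x i = ∑ j : Fin s.card, x (s.orderEmbOfFin rfl j) := by
    conv_lhs => rw [← Finset.map_orderEmbOfFin_univ s rfl]
    rw [Finset.sum_map]
    rfl
  rw [h1, prefixSum, Finset.sum_range]
  refine Finset.sum_le_sum fun j _ => ?_
  rw [dif_pos (by omega)]
  exact hx (Fin.le_def.2 (key j.val j.isLt))

lemma sum_le_eSum {n : ℕ} (x : Fin n → ℝ) (s : Finset (Fin n)) :
    ∑ i ∈ s, x i ≤ eSum x s.card := by
  refine le_csSup ?_ ⟨s, rfl, rfl⟩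
  refine ((Set.finite_range fun t : Finset (Fin n) => ∑ i ∈ t, x i).subset ?_).bddAbove
  rintro _ ⟨t, _, rfl⟩
  exact ⟨t, rfl⟩

lemma exists_card_eq_sum_eq_eSum {n l : ℕ} (x : Fin n → ℝ) (hl : l ≤ n) :
    ∃ s : Finset (Fin n), s.card = l ∧ eSum x l = ∑ i ∈ s, x i := by
  have hfin : {r | ∃ s : Finset (Fin n), s.card = l ∧ r = ∑ i ∈ s, x i}.Finite := by
    refine (Set.finite_range fun t : Finset (Fin n) => ∑ i ∈ t, x i).subset ?_
    rintro _ ⟨t, _, rfl⟩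
    exact ⟨t, rfl⟩
  have hne : {r | ∃ s : Finset (Fin n), s.card = l ∧ r = ∑ i ∈ s, x i}.Nonempty :=
    ⟨_, _, card_filter_val_lt hl, rfl⟩
  exact hne.csSup_mem hfin

lemma eSum_eq_prefixSum {n l : ℕ} {x : Fin n → ℝ} (hx : Antitone x) (hl : l ≤ n) :
    eSum x l = prefixSum x l := by
  apply le_antisymm
  · obtain ⟨s, hs, h⟩ := exists_card_eq_sum_eq_eSum x hl
    rw [h, ← hs]
    exact sum_le_prefixSum_card hx s
  · rw [prefixSum_eq_sum_filter x hl]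
    simpa only [card_filter_val_lt hl] using
      sum_le_eSum x (Finset.univ.filter fun i : Fin n => i.val < l)

lemma SMaj.prefixSum_lt {n l : ℕ} {x y : Fin n → ℝ} (h : SMaj x y) (hx : Antitone x)
    (hy : Antitone y) (h0 : l ≠ 0) (hn : l < n) : prefixSum x l < prefixSum y l := by
  rw [← eSum_eq_prefixSum hx hn.le, ← eSum_eq_prefixSum hy hn.le]
  exact h.2 l (by omega) hn

lemma SMaj.prefixSum_eq {n : ℕ} {x y : Fin n → ℝ} (h : SMaj x y) :
    prefixSum x n = prefixSum y n := by
  rw [prefixSum_self, prefixSum_self, h.1]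

/-- The prefix sums of a member of `K_d(y)` agree with those of `y` at `0`, `d` and `n`. -/
lemma prefixSum_eq_of_mem_Kd {n d r : ℕ} {x y : Fin n → ℝ} (hd : d ≤ n) (hx : x ∈ Kd y d hd)
    (hr : r = 0 ∨ r = d ∨ r = n) : prefixSum x r = prefixSum y r := by
  obtain ⟨_, h1, h2⟩ := hx
  have hdeq : prefixSum x d = prefixSum y d := by
    have := h1.prefixSum_eq
    rwa [prefixSum_take x hd le_rfl, prefixSum_take y hd le_rfl] at this
  rcases hr with rfl | rfl | rfl
  · simp [prefixSum]
  · exact hdeq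
  · have hx' := prefixSum_add (d := d) (r := r - d) x
    have hy' := prefixSum_add (d := d) (r := r - d) y
    rw [Nat.add_sub_cancel' hd] at hx' hy'
    rw [hx', hy', hdeq, h2.prefixSum_eq]

lemma prefixSum_lt_of_mem_Kd {n d r : ℕ} {x y : Fin n → ℝ} (hd : d ≤ n) (hy : Antitone y)
    (hx : x ∈ Kd y d hd) (hr : r < n) (h0 : r ≠ 0) (hrd : r ≠ d) :
    prefixSum x r < prefixSum y r := by
  have hdeq := prefixSum_eq_of_mem_Kd hd hx (Or.inr (Or.inl rfl))
  obtain ⟨⟨_, _, hxa⟩, h1, h2⟩ := hx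
  rcases lt_or_gt_of_ne hrd with h | h
  · rw [← prefixSum_take x hd h.le, ← prefixSum_take y hd h.le]
    exact h1.prefixSum_lt (fun i j hij => hxa hij) (fun i j hij => hy hij) h0 h
  · obtain ⟨s, rfl⟩ := Nat.exists_eq_add_of_lt h
    rw [add_assoc, prefixSum_add x, prefixSum_add y, hdeq]
    refine add_lt_add_right ?_ _
    exact h2.prefixSum_lt (fun i j hij => hxa (Fin.le_def.2 (by simpa using hij)))
      (fun i j hij => hy (Fin.le_def.2 (by simpa using hij))) (by omega) (by omega)

lemma tensor_finProdFinEquiv {n k : ℕ} (x : Fin n → ℝ) (c : Fin k → ℝ) (p : Fin n × Fin k) :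
    tensor x c (finProdFinEquiv p) = x p.1 * c p.2 := by
  rw [tensor, Equiv.symm_apply_apply]

lemma sum_map_tensor {n k : ℕ} (x : Fin n → ℝ) (c : Fin k → ℝ) (s : Finset (Fin n × Fin k)) :
    ∑ i ∈ s.map finProdFinEquiv.toEmbedding, tensor x c i = ∑ p ∈ s, x p.1 * c p.2 := by
  rw [Finset.sum_map]
  exact Finset.sum_congr rfl fun p _ => tensor_finProdFinEquiv x c p

lemma sum_le_eSum_tensor {n k : ℕ} (x : Fin n → ℝ) (c : Fin k → ℝ)
    (s : Finset (Fin n × Fin k)) :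
    ∑ p ∈ s, x p.1 * c p.2 ≤ eSum (tensor x c) s.card := by
  have h := sum_le_eSum (tensor x c) (s.map finProdFinEquiv.toEmbedding)
  rwa [sum_map_tensor, Finset.card_map] at h

/-- Exchanging an element of `s` for a larger one outside `s` shows that `s` is not optimal. -/
lemma sum_lt_eSum_tensor {n k : ℕ} {x : Fin n → ℝ} {c : Fin k → ℝ}
    {s : Finset (Fin n × Fin k)} {p q : Fin n × Fin k} (hp : p ∈ s) (hq : q ∉ s)
    (h : x p.1 * c p.2 < x q.1 * c q.2) :
    ∑ p ∈ s, x p.1 * c p.2 < eSum (tensor x c) s.card := by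
  have hq' : q ∉ s.erase p := fun hm => hq (Finset.mem_of_mem_erase hm)
  have hcard : (insert q (s.erase p)).card = s.card := by
    rw [Finset.card_insert_of_notMem hq', Finset.card_erase_add_one hp]
  have h1 := sum_le_eSum_tensor x c (insert q (s.erase p))
  rw [hcard, Finset.sum_insert hq'] at h1
  have h2 := Finset.add_sum_erase s (fun p => x p.1 * c p.2) hp
  linarith

/-- The cells of the first `r j` rows in every column `j`. -/
def columnPrefix {n k : ℕ} (r : Fin k → ℕ) : Finset (Fin n × Fin k) :=
  Finset.univ.filter fun p => p.1.val < r p.2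

lemma mem_columnPrefix {n k : ℕ} {r : Fin k → ℕ} {i : Fin n} {j : Fin k} :
    (i, j) ∈ columnPrefix r ↔ i.val < r j := by
  simp [columnPrefix]

lemma sum_columnPrefix {n k : ℕ} {r : Fin k → ℕ} (hr : ∀ j, r j ≤ n) (x : Fin n → ℝ)
    (c : Fin k → ℝ) :
    ∑ p ∈ columnPrefix r, x p.1 * c p.2 = ∑ j, prefixSum x (r j) * c j := by
  simp only [columnPrefix, Finset.sum_filter, Fintype.sum_prod_type_right]
  refine Finset.sum_congr rfl fun j _ => ?_
  rw [prefixSum_eq_sum_filter x (hr j), Finset.sum_mul, Finset.sum_filter]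

lemma card_columnPrefix {n k : ℕ} {r : Fin k → ℕ} (hr : ∀ j, r j ≤ n) :
    (columnPrefix r : Finset (Fin n × Fin k)).card = ∑ j, r j := by
  simp only [columnPrefix, Finset.card_filter, Fintype.sum_prod_type_right]
  refine Finset.sum_congr rfl fun j _ => ?_
  rw [← Finset.card_filter, card_filter_val_lt (hr j)]

/-- The sum of the `l` largest components of `x ⊗ c` is bounded by taking the first `r j`
components of `x` in every column `j`, for suitable `r`. -/
lemma exists_eSum_tensor_le {n k l : ℕ} {x : Fin n → ℝ} (hx : Antitone x) {c : Fin k → ℝ}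
    (hc : ∀ j, 0 < c j) (hl : l ≤ n * k) :
    ∃ r : Fin k → ℕ, (∀ j, r j ≤ n) ∧ ∑ j, r j = l ∧
      eSum (tensor x c) l ≤ ∑ j, prefixSum x (r j) * c j := by
  obtain ⟨t, ht, he⟩ := exists_card_eq_sum_eq_eSum (tensor x c) hl
  set col : Fin k → Finset (Fin n) :=
    fun j => Finset.univ.filter fun i => finProdFinEquiv (i, j) ∈ t with hcol
  refine ⟨fun j => (col j).card, fun j => by simpa using (col j).card_le_univ, ?_, ?_⟩
  · have h : t.card = ∑ p : Fin n × Fin k, if finProdFinEquiv p ∈ t then 1 else 0 := by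
      rw [Equiv.sum_comp finProdFinEquiv (fun i => if i ∈ t then 1 else 0)]
      simp
    rw [← ht, h, Fintype.sum_prod_type_right]
    simp only [hcol, Finset.card_filter]
  · have h : ∑ i ∈ t, tensor x c i =
        ∑ p : Fin n × Fin k, if finProdFinEquiv p ∈ t then x p.1 * c p.2 else 0 := by
      have h' := Equiv.sum_comp finProdFinEquiv (fun i => if i ∈ t then tensor x c i else 0)
      simp only [Finset.sum_ite_mem, Finset.univ_inter] at h'
      rw [← h']
      simp only [tensor_finProdFinEquiv]
    rw [he, h, Fintype.sum_prod_type_right]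
    refine Finset.sum_le_sum fun j _ => ?_
    rw [← Finset.sum_filter]
    dsimp only
    rw [← Finset.sum_mul]
    exact mul_le_mul_of_nonneg_right (sum_le_prefixSum_card hx (col j)) (hc j).le

lemma lu_le {k : ℕ} (c : Fin k → ℝ) (j : ℕ) (hj : j + 1 < k) :
    lu c ≤ c ⟨j + 1, hj⟩ / c ⟨j, Nat.lt_of_succ_lt hj⟩ := by
  refine csInf_le ?_ ⟨j, hj, rfl⟩
  refine ((Set.finite_range fun i : Fin k × Fin k => c i.1 / c i.2).subset ?_).bddBelow
  rintro _ ⟨i, hi, rfl⟩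
  exact ⟨(_, _), rfl⟩

lemma gu_eq {k : ℕ} (c : Fin (k + 1) → ℝ) : gu c = c (Fin.last k) / c 0 := by
  simp only [gu, Nat.succ_pos, dif_pos]
  rfl

/-- A non-trivial choice of column heights in `{0, d, n}` is not optimal for `y ⊗ c`. -/
lemma sum_columnPrefix_lt_eSum {n k d : ℕ} (hd : 1 < d)
    {y : Fin n → ℝ} (hy : Antitone y) (hypos : ∀ i, 0 < y i)
    {c : Fin k → ℝ} (hcpos : ∀ i, 0 < c i) (hcanti : Antitone c)
    {i₀ : 0 < n} {i₁ : d - 1 < n} {i₂ : d < n} {i₃ : n - 1 < n}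
    (hlu : max (y ⟨d - 1, i₁⟩ / y ⟨0, i₀⟩) (y ⟨n - 1, i₃⟩ / y ⟨d, i₂⟩) < lu c)
    (hgu : gu c < y ⟨d, i₂⟩ / y ⟨d - 1, i₁⟩)
    {r : Fin k → ℕ} (hr : ∀ j, r j = 0 ∨ r j = d ∨ r j = n)
    (h0 : ∑ j, r j ≠ 0) (h1 : ∑ j, r j ≠ n * k) :
    ∑ j, prefixSum y (r j) * c j < eSum (tensor y c) (∑ j, r j) := by
  have hrn : ∀ j, r j ≤ n := fun j => by rcases hr j with h | h | h <;> omega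
  rw [← sum_columnPrefix hrn, ← card_columnPrefix hrn]
  obtain ⟨hlu1, hlu2⟩ := max_lt_iff.1 hlu
  rw [div_lt_iff₀ (hypos _)] at hlu1 hlu2
  have step : ∀ a b (hb : b ≤ n) (hab : a < b), (a = 0 ∨ a = d ∨ a = n) →
      (b = 0 ∨ b = d ∨ b = n) → y ⟨b - 1, by omega⟩ < lu c * y ⟨a, by omega⟩ := by
    intro a b hb hab ha hb'
    obtain rfl | rfl : a = 0 ∨ a = d := by omega
    · exact (hy (Fin.mk_le_mk.2 (by omega))).trans_lt hlu1
    · obtain rfl : b = n := by omega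
      exact hlu2
  by_cases hconst : ∀ (j : ℕ) (hj : j + 1 < k), r ⟨j + 1, hj⟩ = r ⟨j, by omega⟩
  · obtain _ | k := k
    · simp at h0
    have hall : ∀ j, r j = r 0 := by
      rintro ⟨j, hj⟩
      induction j with
      | zero => rfl
      | succ j ih => rw [hconst j hj, ih]
    have hrd : r 0 = d := by
      simp only [hall, Finset.sum_const, Finset.card_univ, Fintype.card_fin, smul_eq_mul] at h0 h1
      rcases hr 0 with h | h | h
      · simp [h] at h0
      · exact h
      · rw [h, mul_comm] at h1
        exact absurd rfl h1
    rw [gu_eq, div_lt_div_iff₀ (hcpos _) (hypos _)] at hgu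
    refine sum_lt_eSum_tensor (p := (⟨d - 1, by omega⟩, Fin.last k)) (q := (⟨d, by omega⟩, 0))
      (mem_columnPrefix.2 ?_) (mt mem_columnPrefix.1 ?_) ?_
    · rw [hall, hrd]
      exact Nat.sub_lt (by omega) one_pos
    · rw [hrd]
      exact lt_irrefl _
    · simpa only [mul_comm] using hgu
  · push Not at hconst
    obtain ⟨j, hj, hne⟩ := hconst
    have hratio := lu_le c j hj
    rw [le_div_iff₀ (hcpos _)] at hratio
    have hcle : c ⟨j + 1, hj⟩ ≤ c ⟨j, by omega⟩ := hcanti (Fin.mk_le_mk.2 (Nat.le_succ j))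
    rcases lt_or_gt_of_ne hne with hlt | hlt
    · have hs := step _ _ (hrn _) hlt (hr _) (hr _)
      refine sum_lt_eSum_tensor
        (p := (⟨r ⟨j, by omega⟩ - 1, by have := hrn ⟨j, by omega⟩; omega⟩, ⟨j, by omega⟩))
        (q := (⟨r ⟨j + 1, hj⟩, hlt.trans_le (hrn _)⟩, ⟨j + 1, hj⟩))
        (mem_columnPrefix.2 (Nat.sub_lt (by omega) one_pos))
        (mt mem_columnPrefix.1 (lt_irrefl _)) ?_
      calc _ < _ := mul_lt_mul_of_pos_right hs (hcpos _)
        _ = y ⟨r ⟨j + 1, hj⟩, hlt.trans_le (hrn _)⟩ * (lu c * c ⟨j, by omega⟩) := by ring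
        _ ≤ _ := mul_le_mul_of_nonneg_left hratio (hypos _).le
    · have hs := step _ _ (hrn _) hlt (hr _) (hr _)
      refine sum_lt_eSum_tensor
        (p := (⟨r ⟨j + 1, hj⟩ - 1, by have := hrn ⟨j + 1, hj⟩; omega⟩, ⟨j + 1, hj⟩))
        (q := (⟨r ⟨j, by omega⟩, hlt.trans_le (hrn _)⟩, ⟨j, by omega⟩))
        (mem_columnPrefix.2 (Nat.sub_lt (by omega) one_pos))
        (mt mem_columnPrefix.1 (lt_irrefl _)) ?_
      have hy0 := hypos ⟨r ⟨j, by omega⟩, hlt.trans_le (hrn _)⟩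
      have hlu_le : lu c ≤ 1 := by
        by_contra! h
        have := (lt_mul_iff_one_lt_left (hcpos ⟨j, by omega⟩)).2 h
        linarith
      refine mul_lt_mul (hs.trans_le ?_) hcle (hcpos _) hy0.le
      exact mul_le_of_le_one_left hy0.le hlu_le

/-- Lemma 12 of the paper. If
`l_u(c) > max{y_d/y_1, y_n/y_{d+1}}` and `g_u(c) < y_{d+1}/y_d`, then every
`x ∈ K_d(y)` satisfies `x ⊗ c ◁ y ⊗ c` (1-based indices in the informal
statement, 0-based here). -/
theorem stmt16 {n k : ℕ} (d : ℕ) (hd1 : 1 < d) (hd2 : d + 1 < n)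
    (y : Fin n → ℝ) (hy : y ∈ Vn n) (hypos : ∀ i, 0 < y i)
    (c : Fin k → ℝ) (hcpos : ∀ i, 0 < c i) (hcanti : Antitone c)
    (hlu : lu c > max (y ⟨d - 1, by omega⟩ / y ⟨0, by omega⟩)
                      (y ⟨n - 1, by omega⟩ / y ⟨d, by omega⟩))
    (hgu : gu c < y ⟨d, by omega⟩ / y ⟨d - 1, by omega⟩) :
    ∀ x ∈ Kd y d (by omega), SMaj (tensor x c) (tensor y c) := by
  intro x hx
  have hdn : d ≤ n := by omega
  have hrange : ∀ {r : ℕ}, r ≤ n → ¬(r = 0 ∨ r = d ∨ r = n) → prefixSum x r < prefixSum y r :=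
    fun {r} hrn hr => prefixSum_lt_of_mem_Kd hdn hy.2.2 hx (by omega) (by omega) (by omega)
  refine ⟨?_, fun l hl1 hl2 => ?_⟩
  · have hsum : ∀ z : Fin n → ℝ, ∑ i, tensor z c i = (∑ i, z i) * ∑ j, c j := by
      intro z
      rw [← Equiv.sum_comp finProdFinEquiv, Fintype.sum_mul_sum, Fintype.sum_prod_type]
      simp only [tensor_finProdFinEquiv]
    rw [hsum, hsum, hx.1.2.1, hy.2.1]
  · obtain ⟨r, hrn, rfl, hle⟩ := exists_eSum_tensor_le hx.1.2.2 hcpos (l := l) (by omega)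
    refine hle.trans_lt ?_
    by_cases hr : ∀ j, r j = 0 ∨ r j = d ∨ r j = n
    · simp only [fun j => prefixSum_eq_of_mem_Kd hdn hx (hr j)]
      exact sum_columnPrefix_lt_eSum hd1 hy.2.2 hypos hcpos hcanti hlu hgu hr
        (by omega) (by omega)
    · push Not at hr
      obtain ⟨j₀, hj₀⟩ := hr
      refine lt_of_lt_of_le (b := ∑ j, prefixSum y (r j) * c j) ?_ ?_
      · refine Finset.sum_lt_sum (fun j _ => ?_) ⟨j₀, Finset.mem_univ _, ?_⟩
        · refine mul_le_mul_of_nonneg_right ?_ (hcpos j).le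
          by_cases hj : r j = 0 ∨ r j = d ∨ r j = n
          · exact (prefixSum_eq_of_mem_Kd hdn hx hj).le
          · exact (hrange (hrn j) hj).le
        · exact mul_lt_mul_of_pos_right (hrange (hrn j₀) (by tauto)) (hcpos j₀)
      · rw [← sum_columnPrefix hrn, ← card_columnPrefix hrn]
        exact sum_le_eSum_tensor y c _

end
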